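/- (1) For every integer d ≥ 1, |U₁(k[t]/(t^d))| = 2 · q^{⌊d/2⌋}. (2) For every monic irreducible φ ∈ k[t] with φ(−t) = φ(t) (so deg φ is even) and every integer l ≥ 1, |U₁(k[t]/(φ^l))| = q^{l·deg(φ)/2} · (1 + q^{−deg(φ)/2}). -/

import Mathlib

/-!
Let `R` be a finite local ring in which `2` is invertible, with an endomorphism `σ`. If `σ s = -s`,
then `1 + s` is a unit: `σ` maps `1 - s` to `1 + s`, and one of these two, whose sum is `2`, is a
unit. Hence the Cayley transform `x ↦ (1 - x) / (1 + x)`, which is its own inverse, matches the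
elements `s` with `σ s = -s` with the `z` such that `σ z * z = 1` and `1 + z` is a unit. When `1 + z`
is not a unit, `1 - z` is one, and the transform of `-z` is antisymmetric and not a unit; every
antisymmetric nonunit arises in this way. So (`card_unitary_eq`)

  `|U₁(R)| = #{s | σ s = -s} + #{s | σ s = -s, s not a unit}`.

For `R = k[t]/(φ ^ l)`, reduction modulo `φ ^ l` turns the antisymmetric elements into the odd
polynomials of degree less than `l * deg φ`, and the nonunits among them into the multiples of `φ`.
There are `q ^ ⌊n / 2⌋` odd polynomials of degree less than `n`, namely `t * g(t ^ 2)` with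
`deg g < ⌊n / 2⌋` (`card_odd_polys`). If `φ = t`, every odd polynomial is a multiple of `φ`, so the
two terms agree. If `φ(-t) = φ(t)`, the odd multiples of `φ` are `φ * g` with `g` odd
(`card_odd_multiples`), so the second term is `q ^ ((l - 1) * deg φ / 2)`.
-/

open Polynomial

/-- The Cayley transform count of the unitary group of a finite local ring with `2` invertible.
Locality is stated as `hloc`; the zero ring is allowed, and `σ` need not be an involution. -/
theorem card_unitary_eq {R : Type*} [CommRing R] [Finite R] (σ : R →+* R) (h2 : IsUnit (2 : R))
    (hloc : ∀ a b : R, IsUnit (a + b) → IsUnit a ∨ IsUnit b) :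
    Nat.card {z : R // σ z * z = 1} =
      Nat.card {s : R // σ s = -s} + Nat.card {s : R // σ s = -s ∧ ¬ IsUnit s} := by
  have one_add {s : R} (hs : σ s = -s) : IsUnit (1 + s) := by
    have h : IsUnit ((1 + s) + (1 - s)) := by
      convert h2 using 1; ring
    rcases hloc _ _ h with h | h
    · exact h
    · have := h.map σ
      simpa [hs] using this
  have inv_unit {x : R} (hx : IsUnit x) : x * Ring.inverse x = 1 := Ring.mul_inverse_cancel x hx
  -- The Cayley transform `x ↦ (1 - x) / (1 + x)` is its own inverse, since `1 + (1 - x) / (1 + x)`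
  -- is `2 / (1 + x)` and `1 - (1 - x) / (1 + x)` is `2 * x / (1 + x)`.
  have cay {x : R} (hx : IsUnit (1 + x)) :
      IsUnit (1 + (1 - x) * Ring.inverse (1 + x)) ∧
      (1 - (1 - x) * Ring.inverse (1 + x)) * Ring.inverse (1 + (1 - x) * Ring.inverse (1 + x)) = x := by
    have e := inv_unit hx
    have e1 : 1 + (1 - x) * Ring.inverse (1 + x) = 2 * Ring.inverse (1 + x) := by
      linear_combination -e
    have e2 : 1 - (1 - x) * Ring.inverse (1 + x) = x * (2 * Ring.inverse (1 + x)) := by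
      linear_combination -e
    have u : IsUnit (2 * Ring.inverse (1 + x)) := h2.mul hx.ringInverse
    rw [e1, e2]
    exact ⟨u, by rw [mul_assoc, inv_unit u, mul_one]⟩
  have toAnti {z : R} (hz : σ z * z = 1) (hu : IsUnit (1 + z)) :
      σ ((1 - z) * Ring.inverse (1 + z)) = -((1 - z) * Ring.inverse (1 + z)) := by
    have e := inv_unit hu
    have e' := congrArg σ e
    simp only [map_mul, map_add, map_one] at e'
    have hu' : IsUnit (1 + σ z) := by simpa using hu.map σ
    refine (hu.mul hu').mul_left_cancel ?_
    simp only [map_mul, map_sub, map_one]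
    linear_combination (1+z) * (1 - σ z) * e' + (1 + σ z) * (1-z) * e - 2 * hz
  have toUnit {s : R} (hs : σ s = -s) :
      σ ((1 - s) * Ring.inverse (1 + s)) * ((1 - s) * Ring.inverse (1 + s)) = 1 := by
    have e := inv_unit (one_add hs)
    have e' := congrArg σ e
    simp only [map_mul, map_add, map_one, hs] at e'
    simp only [map_mul, map_sub, map_one, hs]
    linear_combination (1 + s) * Ring.inverse (1 + s) * e' + e
  have hA : Nat.card {z : {z : R // σ z * z = 1} // IsUnit (1 + z.1)} =
      Nat.card {s : R // σ s = -s} := by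
    refine Nat.card_congr ⟨fun z => ⟨_, toAnti z.1.2 z.2⟩,
      fun s => ⟨⟨_, toUnit s.2⟩, (cay (one_add s.2)).1⟩, fun z => ?_, fun s => ?_⟩
    · exact Subtype.ext (Subtype.ext (cay z.2).2)
    · exact Subtype.ext (cay (one_add s.2)).2
  -- The remaining `z` are treated by transforming `-z`.
  have hneg {z : R} (h : ¬ IsUnit (1 + z)) : IsUnit (1 + -z) := by
    have h' : IsUnit ((1 + z) + (1 + -z)) := by convert h2 using 1; ring
    exact (hloc _ _ h').resolve_left h
  have hcay' {s : R} (hs : σ s = -s) (hn : ¬ IsUnit s) :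
      ¬ IsUnit (1 + -((1 - s) * Ring.inverse (1 + s))) := by
    have e := inv_unit (one_add hs)
    intro h
    have : 1 + -((1 - s) * Ring.inverse (1 + s)) = s * (2 * Ring.inverse (1 + s)) := by
      linear_combination -e
    rw [this] at h
    exact hn (isUnit_of_mul_isUnit_left h)
  have hcay'' {z : R} (hn : ¬ IsUnit (1 + z)) :
      ¬ IsUnit ((1 - -z) * Ring.inverse (1 + -z)) := fun h =>
    hn (by simpa using isUnit_of_mul_isUnit_left h)
  have hB : Nat.card {z : {z : R // σ z * z = 1} // ¬ IsUnit (1 + z.1)} =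
      Nat.card {s : R // σ s = -s ∧ ¬ IsUnit s} := by
    refine Nat.card_congr ⟨fun z => ⟨_, toAnti (z := -z.1.1) (by simpa using z.1.2) (hneg z.2),
        hcay'' z.2⟩,
      fun s => ⟨⟨-((1 - s.1) * Ring.inverse (1 + s.1)), by
        rw [map_neg, neg_mul_neg]; exact toUnit s.2.1⟩, hcay' s.2.1 s.2.2⟩,
        fun z => ?_, fun s => ?_⟩
    · refine Subtype.ext (Subtype.ext ?_)
      have := (cay (hneg z.2)).2
      simp only at this ⊢
      rw [this, neg_neg]
    · refine Subtype.ext ?_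
      have := (cay (one_add s.2.1)).2
      simp only [neg_neg]
      exact this
  classical
  rw [← hA, ← hB, ← Nat.card_sum]
  exact Nat.card_congr (Equiv.sumCompl _).symm

theorem coeff_comp_neg_X' {k : Type*} [CommRing k] (p : k[X]) (n : ℕ) :
    (p.comp (-X)).coeff n = p.coeff n * (-1) ^ n := by
  rw [← comp_C_mul_X_coeff]; simp

theorem coeff_even_of_odd {k : Type*} [Field k] (h2 : (2 : k) ≠ 0) {p : k[X]}
    (hp : p.comp (-X) = -p) (i : ℕ) : p.coeff (2 * i) = 0 := by
  have h := coeff_comp_neg_X' p (2 * i)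
  rw [hp, coeff_neg, pow_mul] at h
  have h' : 2 * p.coeff (2 * i) = 0 := by
    simp at h; linear_combination -h
  exact (mul_eq_zero.mp h').resolve_left h2

/-- The odd polynomials of degree less than `n` are the `X * g(X ^ 2)` with `g` of degree less
than `n / 2`. -/
theorem card_odd_polys {k : Type*} [Field k] [Fintype k] (h2 : (2 : k) ≠ 0) (n : ℕ) :
    Nat.card {p : k[X] // p.degree < n ∧ p.comp (-X) = -p} = Fintype.card k ^ (n / 2) := by
  have hc : Nat.card (degreeLT k (n / 2)) = Fintype.card k ^ (n / 2) := by
    rw [Nat.card_congr (degreeLTEquiv k (n / 2)).toEquiv]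
    simp
  rw [← hc]
  symm
  refine Nat.card_congr (Equiv.ofBijective
    (fun g : degreeLT k (n / 2) => ⟨X * expand k 2 g.1, ?_, ?_⟩) ⟨?_, ?_⟩)
  · rw [degree_lt_iff_coeff_zero]
    intro m hm
    obtain ⟨g, hg⟩ := g
    rw [mem_degreeLT, degree_lt_iff_coeff_zero] at hg
    rcases m with _ | m
    · simp
    · rw [coeff_X_mul, coeff_expand two_pos]
      split_ifs with h
      · exact hg _ (by omega)
      · rfl
  · rw [mul_comp, X_comp, expand_eq_comp_X_pow, comp_assoc]
    simp
  · intro a b hab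
    have := Subtype.ext_iff.mp hab
    exact Subtype.ext (expand_injective two_pos (mul_left_cancel₀ X_ne_zero this))
  · rintro ⟨p, hd, hp⟩
    rw [degree_lt_iff_coeff_zero] at hd
    refine ⟨⟨contract 2 (divX p), ?_⟩, Subtype.ext ?_⟩
    · rw [mem_degreeLT, degree_lt_iff_coeff_zero]
      intro m hm
      rw [coeff_contract two_ne_zero, coeff_divX]
      exact hd _ (by omega)
    · ext m
      rcases m with _ | m
      · simpa using (coeff_even_of_odd h2 hp 0).symm
      · simp only [coeff_X_mul]
        rw [coeff_expand two_pos]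
        split_ifs with h
        · rw [coeff_contract two_ne_zero, coeff_divX, Nat.div_mul_cancel h]
        · obtain ⟨j, hj⟩ : ∃ j, m + 1 = 2 * j := ⟨(m + 1) / 2, by omega⟩
          rw [hj, coeff_even_of_odd h2 hp]

/-- Counting in `k[X] ⧸ (f)` by means of the unique representatives of degree less than `deg f`. -/
theorem card_quotient_subtype {k : Type*} [Field k] {f : k[X]} (hf : f.Monic)
    (Q : k[X] ⧸ Ideal.span {f} → Prop) :
    Nat.card {s // Q s} =
      Nat.card {p : k[X] // p.degree < f.degree ∧ Q (Ideal.Quotient.mk _ p)} := by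
  symm
  refine Nat.card_congr (Equiv.ofBijective (fun p => ⟨Ideal.Quotient.mk _ p.1, p.2.2⟩) ⟨?_, ?_⟩)
  · rintro ⟨a, ha, _⟩ ⟨b, hb, _⟩ hab
    have := Subtype.ext_iff.mp hab
    rw [Ideal.Quotient.eq, Ideal.mem_span_singleton] at this
    exact Subtype.ext (sub_eq_zero.mp (eq_zero_of_dvd_of_degree_lt this
      ((degree_sub_le _ _).trans_lt (max_lt ha hb))))
  · rintro ⟨s, hs⟩
    obtain ⟨p, rfl⟩ := Ideal.Quotient.mk_surjective s
    have h : Ideal.Quotient.mk (Ideal.span {f}) (p %ₘ f) = Ideal.Quotient.mk _ p := by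
      rw [Ideal.Quotient.eq, Ideal.mem_span_singleton]
      exact ⟨-(p /ₘ f), by linear_combination modByMonic_add_div p f⟩
    exact ⟨⟨p %ₘ f, degree_modByMonic_lt _ hf, h ▸ hs⟩, Subtype.ext h⟩

/-- On reduced representatives, antisymmetry modulo `f` is oddness as a polynomial, because
`p(-X) + p` has degree less than `deg f`. -/
theorem anti_mk_iff {k : Type*} [Field k] {f : k[X]}
    (σ : (k[X] ⧸ Ideal.span {f}) →+* (k[X] ⧸ Ideal.span {f}))
    (hσ : ∀ p : k[X], σ (Ideal.Quotient.mk (Ideal.span {f}) p) =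
      Ideal.Quotient.mk (Ideal.span {f}) (p.comp (-X)))
    {p : k[X]} (hp : p.degree < f.degree) :
    σ (Ideal.Quotient.mk _ p) = -Ideal.Quotient.mk _ p ↔ p.comp (-X) = -p := by
  rw [hσ, ← map_neg, Ideal.Quotient.eq, Ideal.mem_span_singleton]
  refine ⟨fun h => sub_eq_zero.mp (eq_zero_of_dvd_of_degree_lt h
      ((degree_sub_le _ _).trans_lt (max_lt ?_ ?_))), fun h => ?_⟩
  · rwa [degree_comp_neg_X]
  · rwa [degree_neg]
  · rw [h, sub_self]; exact dvd_zero _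

theorem isUnit_mk_iff {k : Type*} [Field k] {φ : k[X]} (hφ : Irreducible φ) {l : ℕ} (hl : l ≠ 0)
    (p : k[X]) : IsUnit (Ideal.Quotient.mk (Ideal.span {φ ^ l}) p) ↔ ¬ φ ∣ p := by
  have : (Ideal.span {φ}).IsMaximal := PrincipalIdealRing.isMaximal_of_irreducible hφ
  rw [← Ideal.span_singleton_pow, ← Ideal.mem_span_singleton]
  exact Ideal.Quotient.isUnit_mk_pow_iff_notMem _ hl

/-- The two terms count all odd polynomials of degree less than `deg (φ ^ l)`, and those divisible
by `φ`. The symmetry of `φ` enters only through the existence of `σ`, so the case `φ = X` is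
covered. -/
theorem card_unitary_primary {k : Type*} [Field k] [Fintype k] (h2 : (2 : k) ≠ 0)
    {φ : k[X]} (hm : φ.Monic) (hφ : Irreducible φ) {l : ℕ} (hl : l ≠ 0)
    (σ : (k[X] ⧸ Ideal.span {φ ^ l}) →+* (k[X] ⧸ Ideal.span {φ ^ l}))
    (hσ : ∀ p : k[X], σ (Ideal.Quotient.mk (Ideal.span {φ ^ l}) p) =
      Ideal.Quotient.mk (Ideal.span {φ ^ l}) (p.comp (-X))) :
    Nat.card {z // σ z * z = 1} = Fintype.card k ^ (l * φ.natDegree / 2) +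
      Nat.card {p : k[X] // p.degree < (l * φ.natDegree : ℕ) ∧ p.comp (-X) = -p ∧ φ ∣ p} := by
  have hml : (φ ^ l).Monic := hm.pow l
  have hdeg : (φ ^ l).degree = (l * φ.natDegree : ℕ) := by
    rw [degree_eq_natDegree hml.ne_zero, natDegree_pow]
  have := hml.finite_quotient
  have : Finite (k[X] ⧸ Ideal.span {φ ^ l}) := Module.finite_of_finite k
  have hu2 : IsUnit (2 : k[X] ⧸ Ideal.span {φ ^ l}) := by
    have h := h2.isUnit.map (algebraMap k (k[X] ⧸ Ideal.span {φ ^ l}))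
    rwa [map_ofNat] at h
  have hloc : ∀ a b : k[X] ⧸ Ideal.span {φ ^ l}, IsUnit (a + b) → IsUnit a ∨ IsUnit b := by
    intro a b
    obtain ⟨a, rfl⟩ := Ideal.Quotient.mk_surjective a
    obtain ⟨b, rfl⟩ := Ideal.Quotient.mk_surjective b
    rw [← map_add, isUnit_mk_iff hφ hl, isUnit_mk_iff hφ hl, isUnit_mk_iff hφ hl]
    contrapose!
    rintro ⟨ha, hb⟩
    exact dvd_add ha hb
  rw [card_unitary_eq σ hu2 hloc, card_quotient_subtype hml, card_quotient_subtype hml,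
    ← card_odd_polys h2]
  congr 1
  · refine Nat.card_congr (Equiv.subtypeEquivRight fun p => ?_)
    rw [← hdeg]
    exact and_congr_right fun hp => anti_mk_iff σ hσ hp
  · refine Nat.card_congr (Equiv.subtypeEquivRight fun p => ?_)
    rw [← hdeg]
    refine and_congr_right fun hp => and_congr (anti_mk_iff σ hσ hp) ?_
    rw [isUnit_mk_iff hφ hl, not_not]

theorem card_odd_multiples {k : Type*} [Field k] [Fintype k] (h2 : (2 : k) ≠ 0)
    {φ : k[X]} (hm : φ.Monic) (hs : φ.comp (-X) = φ) (l : ℕ) :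
    Nat.card {p : k[X] // p.degree < ((l + 1) * φ.natDegree : ℕ) ∧ p.comp (-X) = -p ∧ φ ∣ p} =
      Fintype.card k ^ (l * φ.natDegree / 2) := by
  rw [← card_odd_polys h2]
  symm
  have hd (g : k[X]) : (φ * g).degree < ((l + 1) * φ.natDegree : ℕ) ↔
      g.degree < (l * φ.natDegree : ℕ) := by
    rcases eq_or_ne g 0 with rfl | hg
    · rw [mul_zero, degree_zero]
      exact iff_of_true (WithBot.bot_lt_coe _) (WithBot.bot_lt_coe _)
    · rw [← natDegree_lt_iff_degree_lt hg,
        ← natDegree_lt_iff_degree_lt (mul_ne_zero hm.ne_zero hg), natDegree_mul hm.ne_zero hg,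
        add_one_mul]
      omega
  have ho (g : k[X]) : (φ * g).comp (-X) = -(φ * g) ↔ g.comp (-X) = -g := by
    rw [mul_comp, hs, ← mul_neg]
    exact mul_right_inj' hm.ne_zero
  refine Nat.card_congr (Equiv.ofBijective
    (fun g => ⟨φ * g.1, (hd _).2 g.2.1, (ho _).2 g.2.2, dvd_mul_right _ _⟩) ⟨?_, ?_⟩)
  · intro a b hab
    exact Subtype.ext (mul_left_cancel₀ hm.ne_zero (Subtype.ext_iff.mp hab))
  · rintro ⟨_, h1, h3, g, rfl⟩
    exact ⟨⟨g, (hd g).1 h1, (ho g).1 h3⟩, rfl⟩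

theorem even_natDegree {k : Type*} [Field k] (h2 : (2 : k) ≠ 0) {φ : k[X]} (hm : φ.Monic)
    (hs : φ.comp (-X) = φ) : Even φ.natDegree := by
  by_contra h
  rw [Nat.not_even_iff_odd] at h
  have := coeff_comp_neg_X' φ φ.natDegree
  rw [hs, hm.coeff_natDegree, h.neg_one_pow] at this
  exact h2 (by linear_combination this)


/-- let `k` be a finite field of odd characteristic with `q` elements.
(1) For `d ≥ 1`, the group `U₁(k[t]/(t^d)) = {z : σ(z)z = 1}` has order `2·q^{⌊d/2⌋}`.
(2) For `φ` monic irreducible with `φ(-t) = φ(t)` and `l ≥ 1`, the group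
`U₁(k[t]/(φ^l))` has order `q^{l·deg φ/2}(1 + q^{-deg φ/2})`. -/
theorem card_unitary_group_quotients
    {k : Type*} [Field k] [Fintype k] (hchar : ringChar k ≠ 2) :
    (∀ d : ℕ, 1 ≤ d →
      ∀ σ : (Polynomial k ⧸ Ideal.span {(X : Polynomial k) ^ d}) →+*
            (Polynomial k ⧸ Ideal.span {(X : Polynomial k) ^ d}),
        (∀ p : Polynomial k,
          σ (Ideal.Quotient.mk (Ideal.span {(X : Polynomial k) ^ d}) p) =
            Ideal.Quotient.mk (Ideal.span {(X : Polynomial k) ^ d}) (p.comp (-X))) →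
        Nat.card {z : Polynomial k ⧸ Ideal.span {(X : Polynomial k) ^ d} //
            σ z * z = 1} = 2 * Fintype.card k ^ (d / 2)) ∧
    (∀ φ : Polynomial k, φ.Monic → Irreducible φ → φ.comp (-X) = φ →
      ∀ l : ℕ, 1 ≤ l →
      ∀ σ : (Polynomial k ⧸ Ideal.span {φ ^ l}) →+*
            (Polynomial k ⧸ Ideal.span {φ ^ l}),
        (∀ p : Polynomial k,
          σ (Ideal.Quotient.mk (Ideal.span {φ ^ l}) p) =
            Ideal.Quotient.mk (Ideal.span {φ ^ l}) (p.comp (-X))) →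
        (Nat.card {z : Polynomial k ⧸ Ideal.span {φ ^ l} // σ z * z = 1} : ℝ) =
          (Fintype.card k : ℝ) ^ (((l * φ.natDegree : ℕ) : ℝ) / 2) *
            (1 + (Fintype.card k : ℝ) ^ (-(φ.natDegree : ℝ) / 2))) := by
  have h2 : (2 : k) ≠ 0 := Ring.two_ne_zero hchar
  refine ⟨fun d hd σ hσ => ?_, fun φ hm hφ hs l hl σ hσ => ?_⟩
  · rw [card_unitary_primary h2 monic_X irreducible_X (by omega) σ hσ, two_mul, natDegree_X,
      mul_one, ← card_odd_polys h2]
    congr 1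
    -- Odd polynomials have no constant term, so divisibility by `X` is automatic.
    refine Nat.card_congr (Equiv.subtypeEquivRight fun p => and_congr_right fun _ => ?_)
    exact and_iff_left_of_imp fun hp => X_dvd_iff.2 (coeff_even_of_odd h2 hp 0)
  · obtain ⟨l, rfl⟩ : ∃ m, l = m + 1 := ⟨l - 1, by omega⟩
    obtain ⟨n, hn⟩ := even_natDegree h2 hm hs
    have hq : (0 : ℝ) < Fintype.card k := by exact_mod_cast Fintype.card_pos
    rw [card_unitary_primary h2 hm hφ (by omega) σ hσ, card_odd_multiples h2 hm hs, hn]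
    have e1 : (l + 1) * (n + n) / 2 = (l + 1) * n := by
      rw [← two_mul, mul_left_comm, Nat.mul_div_cancel_left _ two_pos]
    have e2 : l * (n + n) / 2 = l * n := by
      rw [← two_mul, mul_left_comm, Nat.mul_div_cancel_left _ two_pos]
    rw [e1, e2, mul_add, mul_one, ← Real.rpow_add hq]
    push_cast
    rw [← Real.rpow_natCast, ← Real.rpow_natCast]
    congr 2 <;> push_cast <;> ring
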